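/- Let F be the free group on a set of generators {E_x : x ∈ U} where U has at least two elements, and let s ∈ U be a distinguished element. Then the submonoid of F generated by the set {E_x : x ∈ U} ∪ {E_s⁻¹} ∪ {E_x·E_y⁻¹ : x, y ∈ U, x ≠ y} is a subgroup of F; in fact it is all of F. (This is the algebraic content of the insecurity of the simple protocol in which user x sends message M to y as E_y(M) and y replies with E_x(M): the monoid generated by the operators available to the adversary s, namely all encryptions E_x, the decryption D_s = E_s⁻¹, and the exchanged strings β_1(x,y) = E_x·E_y⁻¹, forms a subgroup of the Dolev–Yao group.) -/

import Mathlib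

/-!
The submonoid contains every generator `E_x`, so it is all of `F` as soon as it contains every
`E_x⁻¹`. For `x = s` this is one of the given elements, and for `x ≠ s` it is the product
`E_s⁻¹ * (E_s * E_x⁻¹)` of two of them. Closure under inverses is then immediate.
-/

/-- **(Insecurity of the simple echo protocol.)**  Let `F` be the free group on
generators `{E_x : x ∈ U}` with `U` having at least two elements, and let `s ∈ U` be
the adversary.  The submonoid of `F` generated by all encryptions `E_x`, the
decryption `D_s = E_s⁻¹`, and the exchanged strings `E_x · E_y⁻¹` (`x ≠ y`) is a
subgroup of `F` (closed under inverses); in fact it is all of `F`. -/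
theorem simple_protocol_adversary_monoid_is_subgroup
    (U : Type) [Nontrivial U] (s : U) :
    (∀ g ∈ Submonoid.closure
        ((Set.range (FreeGroup.of : U → FreeGroup U) ∪ {(FreeGroup.of s)⁻¹}) ∪
          {g : FreeGroup U | ∃ x y : U, x ≠ y ∧ g = FreeGroup.of x * (FreeGroup.of y)⁻¹}),
      g⁻¹ ∈ Submonoid.closure
        ((Set.range (FreeGroup.of : U → FreeGroup U) ∪ {(FreeGroup.of s)⁻¹}) ∪
          {g : FreeGroup U | ∃ x y : U, x ≠ y ∧ g = FreeGroup.of x * (FreeGroup.of y)⁻¹})) ∧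
    Submonoid.closure
        ((Set.range (FreeGroup.of : U → FreeGroup U) ∪ {(FreeGroup.of s)⁻¹}) ∪
          {g : FreeGroup U | ∃ x y : U, x ≠ y ∧ g = FreeGroup.of x * (FreeGroup.of y)⁻¹}) = ⊤ := by
  have key : Submonoid.closure
        ((Set.range (FreeGroup.of : U → FreeGroup U) ∪ {(FreeGroup.of s)⁻¹}) ∪
          {g : FreeGroup U | ∃ x y : U, x ≠ y ∧ g = FreeGroup.of x * (FreeGroup.of y)⁻¹}) = ⊤ := by
    refine (Submonoid.eq_top_iff' _).2 fun g => ?_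
    have hs := Submonoid.subset_closure (s := (Set.range (FreeGroup.of : U → FreeGroup U) ∪
        {(FreeGroup.of s)⁻¹}) ∪
          {g : FreeGroup U | ∃ x y : U, x ≠ y ∧ g = FreeGroup.of x * (FreeGroup.of y)⁻¹})
    induction g using FreeGroup.induction_on with
    | C1 => exact one_mem _
    | of x => exact hs (Or.inl (Or.inl ⟨x, rfl⟩))
    | inv_of x _ =>
      by_cases hx : x = s
      · subst hx
        exact hs (Or.inl (Or.inr rfl))
      · -- `D_x = D_s · (E_s · D_x)`
        have h := mul_mem (hs (Or.inl (Or.inr rfl)))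
          (hs (Or.inr ⟨s, x, Ne.symm hx, rfl⟩))
        rwa [inv_mul_cancel_left] at h
    | mul a b ha hb => exact mul_mem ha hb
  rw [key]
  exact ⟨fun _ _ => Submonoid.mem_top _, rfl⟩
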